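/- Let N be a positive integer and S' ⊆ S ⊆ Fin N with |S| = 256 and |S'| = 24 (as arises from 4-coloring the complete graph K₄, where S consists of the 256 assignments of 4 colors to the four vertices and S' of the 4! = 24 proper colorings). Let ψ_S be the uniform superposition over S, O_{S'} the oracle flipping the sign of basis states in S', and G = R_{ψ_S} ∘ O_{S'}. Then after two Grover iterations, for every i ∈ S', |⟨e i, G² ψ_S⟩|² = 43681/1048576 (≈ 0.041657), and for every i ∈ S ∖ S', |⟨e i, G² ψ_S⟩|² = 29/30408704 (≈ 10⁻⁶). -/

import Mathlib

open scoped InnerProductSpace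

/-- The uniform superposition `ψ_T = (1/√|T|) ∑_{i∈T} e i` over a finite set `T` of
basis indices. -/
noncomputable def uniformSuperposition {ι : Type*} [Fintype ι] [DecidableEq ι]
    (T : Finset ι) : EuclideanSpace ℂ ι :=
  (Real.sqrt T.card)⁻¹ • ∑ i ∈ T, EuclideanSpace.single i (1 : ℂ)

/-- The oracle `O_{S'}`, flipping the sign of the basis states indexed by `S'`. -/
noncomputable def groverOracle {ι : Type*} [Fintype ι] [DecidableEq ι] (S' : Finset ι)
    (x : EuclideanSpace ℂ ι) : EuclideanSpace ℂ ι :=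
  WithLp.toLp 2 fun i => if i ∈ S' then -x i else x i

/-- The reflection `R_ψ : x ↦ 2⟨ψ, x⟩ψ − x` about a vector `ψ`. -/
noncomputable def groverReflection {ι : Type*} [Fintype ι]
    (ψ : EuclideanSpace ℂ ι) (x : EuclideanSpace ℂ ι) : EuclideanSpace ℂ ι :=
  (2 : ℂ) • ⟪ψ, x⟫_ℂ • ψ - x

/-!
In the real plane spanned by `ψ_{S'}` and `ψ_{S \ S'}`, write the state at angle `t` as
`sin t • ψ_{S'} + cos t • ψ_{S \ S'}`. The start `ψ_S` sits at the angle `θ` with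
`sin² θ = |S'| / |S|`. The oracle is the reflection `t ↦ -t` and `R_{ψ_S}` is the reflection
`t ↦ 2θ - t`, so a Grover iteration rotates by `2θ` and `k` of them lead to the angle
`(2k + 1)θ`. For `k = 2` the probabilities are rational because `sin (5θ) / sin θ` and
`cos (5θ) / cos θ` are polynomials in `sin² θ` and `cos² θ`.
-/

section GroverRotation

open Real

theorem sin_five_mul (x : ℝ) :
    sin (5 * x) = sin x * (16 * (sin x ^ 2) ^ 2 - 20 * sin x ^ 2 + 5) := by
  rw [show 5 * x = 3 * x + 2 * x by ring, sin_add, sin_three_mul, cos_three_mul, sin_two_mul,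
    cos_two_mul]
  linear_combination (8 * sin x * cos x ^ 2 + 8 * sin x - 16 * sin x ^ 3) * sin_sq_add_cos_sq x

theorem cos_five_mul (x : ℝ) :
    cos (5 * x) = cos x * (16 * (cos x ^ 2) ^ 2 - 20 * cos x ^ 2 + 5) := by
  rw [show 5 * x = 3 * x + 2 * x by ring, cos_add, sin_three_mul, cos_three_mul, sin_two_mul,
    cos_two_mul]
  linear_combination (8 * cos x * sin x ^ 2 + 2 * cos x - 8 * cos x ^ 3) * sin_sq_add_cos_sq x

variable {ι : Type*} {S S' T : Finset ι}

/-- The angle `θ = arcsin √(|S'| / |S|)` between the initial state `ψ_S` and the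
unmarked axis `ψ_{S \ S'}`; one Grover iteration is the rotation by `2θ`. -/
noncomputable def groverAngle (S' S : Finset ι) : ℝ :=
  arcsin √(S'.card / S.card)

theorem sin_groverAngle (hss : S' ⊆ S) : sin (groverAngle S' S) = √(S'.card / S.card) := by
  have card_le : (S'.card : ℝ) ≤ S.card := mod_cast Finset.card_le_card hss
  have ratio_le_one : √((S'.card : ℝ) / S.card) ≤ 1 :=
    sqrt_le_one.2 (div_le_one_of_le₀ card_le (Nat.cast_nonneg _))
  exact sin_arcsin (neg_one_lt_zero.le.trans (sqrt_nonneg _)) ratio_le_one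

variable [DecidableEq ι]

theorem cos_groverAngle (hS : S.Nonempty) (hss : S' ⊆ S) :
    cos (groverAngle S' S) = √((S \ S').card / S.card) := by
  have card_ne_zero : (S.card : ℝ) ≠ 0 := mod_cast hS.card_ne_zero
  rw [groverAngle, cos_arcsin, sq_sqrt (by positivity), Finset.cast_card_sdiff hss, sub_div,
    div_self card_ne_zero]

variable [Fintype ι]

theorem uniformSuperposition_apply (T : Finset ι) (i : ι) :
    uniformSuperposition T i = if i ∈ T then ((√T.card)⁻¹ : ℂ) else 0 := by
  simp [uniformSuperposition, Pi.single_apply]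

theorem sqrt_card_div_smul_uniformSuperposition (S T : Finset ι) :
    √(T.card / S.card) • uniformSuperposition T =
      (√S.card)⁻¹ • ∑ i ∈ T, EuclideanSpace.single i (1 : ℂ) := by
  obtain rfl | hT := T.eq_empty_or_nonempty
  · simp
  · have sqrt_ne_zero : √(T.card : ℝ) ≠ 0 := by simpa using hT.ne_empty
    rw [uniformSuperposition, smul_smul, sqrt_div (Nat.cast_nonneg _)]
    congr 1
    field_simp

theorem inner_uniformSuperposition_of_subset (hTS : T ⊆ S) :
    ⟪uniformSuperposition S, uniformSuperposition T⟫_ℂ = (√(T.card / S.card) : ℝ) := by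
  have coord (i : ι) : ⟪uniformSuperposition S i, uniformSuperposition T i⟫_ℂ =
      if i ∈ T then (((√T.card)⁻¹ * (√S.card)⁻¹ : ℝ) : ℂ) else 0 := by
    by_cases hi : i ∈ T
    · simp [uniformSuperposition_apply, hi, hTS hi]
    · simp [uniformSuperposition_apply, hi]
  have card_mul : (T.card : ℝ) * ((√T.card)⁻¹ * (√S.card)⁻¹) = √(T.card / S.card) := by
    rw [← mul_assoc, ← div_eq_mul_inv (T.card : ℝ), div_sqrt, ← div_eq_mul_inv,
      sqrt_div (Nat.cast_nonneg _)]
  rw [PiLp.inner_apply, Finset.sum_congr rfl fun i _ => coord i, Finset.sum_ite_mem,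
    Finset.univ_inter, Finset.sum_const, nsmul_eq_mul, ← card_mul]
  push_cast
  rfl

/-- The state `sin t • ψ_{S'} + cos t • ψ_{S \ S'}` of the real plane in which Grover's
iteration takes place; the unmarked axis is at angle `0` and the marked one at `π / 2`. -/
noncomputable def groverPlaneState (S' S : Finset ι) (t : ℝ) : EuclideanSpace ℂ ι :=
  sin t • uniformSuperposition S' + cos t • uniformSuperposition (S \ S')

theorem groverPlaneState_groverAngle (hS : S.Nonempty) (hss : S' ⊆ S) :
    groverPlaneState S' S (groverAngle S' S) = uniformSuperposition S := by
  rw [groverPlaneState, sin_groverAngle hss, cos_groverAngle hS hss,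
    sqrt_card_div_smul_uniformSuperposition, sqrt_card_div_smul_uniformSuperposition,
    ← smul_add, add_comm, Finset.sum_sdiff hss, uniformSuperposition]

theorem inner_uniformSuperposition_groverPlaneState (hS : S.Nonempty) (hss : S' ⊆ S) (t : ℝ) :
    ⟪uniformSuperposition S, groverPlaneState S' S t⟫_ℂ = cos (groverAngle S' S - t) := by
  rw [groverPlaneState, inner_add_right, inner_smul_right_eq_smul, inner_smul_right_eq_smul,
    inner_uniformSuperposition_of_subset hss,
    inner_uniformSuperposition_of_subset Finset.sdiff_subset,
    ← sin_groverAngle hss, ← cos_groverAngle hS hss, cos_sub]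
  simp only [Complex.real_smul]
  push_cast
  ring

theorem groverOracle_groverPlaneState (S' S : Finset ι) (t : ℝ) :
    groverOracle S' (groverPlaneState S' S t) = groverPlaneState S' S (-t) := by
  ext i
  by_cases hi : i ∈ S' <;>
    simp [groverOracle, groverPlaneState, uniformSuperposition_apply, hi]

theorem groverReflection_groverPlaneState (hS : S.Nonempty) (hss : S' ⊆ S) (t : ℝ) :
    groverReflection (uniformSuperposition S) (groverPlaneState S' S t) =
      groverPlaneState S' S (2 * groverAngle S' S - t) := by
  set θ := groverAngle S' S with hθ
  have sin_reflect : sin (2 * θ - t) = 2 * cos (θ - t) * sin θ - sin t := by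
    have := two_mul_sin_mul_cos θ (θ - t)
    rw [sub_sub_cancel, ← add_sub_assoc, ← two_mul] at this
    linarith
  have cos_reflect : cos (2 * θ - t) = 2 * cos (θ - t) * cos θ - cos t := by
    have := two_mul_cos_mul_cos θ (θ - t)
    rw [sub_sub_cancel, ← add_sub_assoc, ← two_mul] at this
    linarith
  have scalar : (2 : ℂ) * (cos (θ - t) : ℝ) = (2 * cos (θ - t) : ℝ) := by push_cast; rfl
  rw [groverReflection, inner_uniformSuperposition_groverPlaneState hS hss, ← hθ, smul_smul,
    scalar, Complex.coe_smul, ← groverPlaneState_groverAngle hS hss, ← hθ]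
  simp only [groverPlaneState, sin_reflect, cos_reflect]
  module

theorem iterate_grover_uniformSuperposition (hS : S.Nonempty) (hss : S' ⊆ S) (k : ℕ) :
    (groverReflection (uniformSuperposition S) ∘ groverOracle S')^[k] (uniformSuperposition S) =
      groverPlaneState S' S ((2 * k + 1) * groverAngle S' S) := by
  induction k with
  | zero => simp [groverPlaneState_groverAngle hS hss]
  | succ k ih =>
    rw [Function.iterate_succ_apply', ih, Function.comp_apply, groverOracle_groverPlaneState,
      groverReflection_groverPlaneState hS hss]
    congr 1
    push_cast
    ring

theorem sq_norm_inner_single_groverPlaneState_of_mem {i : ι} (hi : i ∈ S') (t : ℝ) :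
    ‖⟪EuclideanSpace.single i (1 : ℂ), groverPlaneState S' S t⟫_ℂ‖ ^ 2 =
      sin t ^ 2 / S'.card := by
  have amplitude : ⟪EuclideanSpace.single i (1 : ℂ), groverPlaneState S' S t⟫_ℂ =
      (sin t / √S'.card : ℝ) := by
    simp [EuclideanSpace.inner_single_left, groverPlaneState, uniformSuperposition_apply, hi,
      div_eq_mul_inv]
  rw [amplitude, Complex.norm_real, norm_eq_abs, sq_abs, div_pow, sq_sqrt (Nat.cast_nonneg _)]

theorem sq_norm_inner_single_groverPlaneState_of_mem_sdiff {i : ι} (hi : i ∈ S \ S') (t : ℝ) :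
    ‖⟪EuclideanSpace.single i (1 : ℂ), groverPlaneState S' S t⟫_ℂ‖ ^ 2 =
      cos t ^ 2 / (S \ S').card := by
  have amplitude : ⟪EuclideanSpace.single i (1 : ℂ), groverPlaneState S' S t⟫_ℂ =
      (cos t / √(S \ S').card : ℝ) := by
    have hi' : i ∉ S' := (Finset.mem_sdiff.1 hi).2
    simp only [EuclideanSpace.inner_single_left, groverPlaneState, PiLp.add_apply,
      PiLp.smul_apply, uniformSuperposition_apply, if_pos hi, if_neg hi']
    simp [div_eq_mul_inv]
  rw [amplitude, Complex.norm_real, norm_eq_abs, sq_abs, div_pow, sq_sqrt (Nat.cast_nonneg _)]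

theorem grover_four_coloring_K4_general (hss : S' ⊆ S) (k : ℕ)
    (G : EuclideanSpace ℂ ι → EuclideanSpace ℂ ι)
    (hG : G = groverReflection (uniformSuperposition S) ∘ groverOracle S') :
    (∀ i ∈ S',
      ‖⟪EuclideanSpace.single i (1 : ℂ), G^[k] (uniformSuperposition S)⟫_ℂ‖ ^ 2 =
        sin ((2 * k + 1) * groverAngle S' S) ^ 2 / S'.card) ∧
    (∀ i ∈ S \ S',
      ‖⟪EuclideanSpace.single i (1 : ℂ), G^[k] (uniformSuperposition S)⟫_ℂ‖ ^ 2 =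
        cos ((2 * k + 1) * groverAngle S' S) ^ 2 / (S \ S').card) := by
  subst hG
  refine ⟨fun i hi => ?_, fun i hi => ?_⟩
  · rw [iterate_grover_uniformSuperposition ⟨i, hss hi⟩ hss,
      sq_norm_inner_single_groverPlaneState_of_mem hi]
  · rw [iterate_grover_uniformSuperposition ⟨i, (Finset.mem_sdiff.1 hi).1⟩ hss,
      sq_norm_inner_single_groverPlaneState_of_mem_sdiff hi]

end GroverRotation

/-- **Statevector calculation for 4-coloring `K₄`** (`|S| = 256` color assignments,
`|S'| = 24` proper colorings): after two Grover iterations each marked state is measured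
with probability `43681/1048576 ≈ 0.041657`, and each unmarked state of the restricted
space with probability `29/30408704 ≈ 10⁻⁶`. -/
theorem grover_four_coloring_K4
    (N : ℕ) (hN : 0 < N) (S' S : Finset (Fin N)) (hss : S' ⊆ S)
    (hS : S.card = 256) (hS' : S'.card = 24)
    (G : EuclideanSpace ℂ (Fin N) → EuclideanSpace ℂ (Fin N))
    (hG : G = groverReflection (uniformSuperposition S) ∘ groverOracle S') :
    (∀ i ∈ S',
      ‖⟪EuclideanSpace.single i (1 : ℂ), G^[2] (uniformSuperposition S)⟫_ℂ‖ ^ 2 =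
        43681 / 1048576) ∧
    (∀ i ∈ S \ S',
      ‖⟪EuclideanSpace.single i (1 : ℂ), G^[2] (uniformSuperposition S)⟫_ℂ‖ ^ 2 =
        29 / 30408704) := by
  have hdiff : (S \ S').card = 232 := by rw [Finset.card_sdiff_of_subset hss, hS, hS']
  have hne : S.Nonempty := Finset.card_pos.1 (by lia)
  have sin_sq : Real.sin (groverAngle S' S) ^ 2 = 3 / 32 := by
    rw [sin_groverAngle hss, Real.sq_sqrt (by positivity), hS, hS']
    norm_num
  have cos_sq : Real.cos (groverAngle S' S) ^ 2 = 29 / 32 := by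
    rw [cos_groverAngle hne hss, Real.sq_sqrt (by positivity), hS, hdiff]
    norm_num
  have five : 2 * ((2 : ℕ) : ℝ) + 1 = 5 := by norm_num
  obtain ⟨marked, unmarked⟩ := grover_four_coloring_K4_general hss 2 G hG
  refine ⟨fun i hi => ?_, fun i hi => ?_⟩
  · rw [marked i hi, five, sin_five_mul, mul_pow, sin_sq, hS']
    norm_num
  · rw [unmarked i hi, five, cos_five_mul, mul_pow, cos_sq, hdiff]
    norm_num
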